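/- Let G be a group, U a normal subgroup of a subgroup P ≤ G, and suppose the abelianization claim: if U ≤ P with P/U abelian and [P,P] ⊆ U ⊆ P with U itself satisfying [P,P] = U, then P^ab = P/U. Concretely: let ℓ be a field of characteristic ≠ 2 with involution x↦x̄ that is not the identity, and let P = {u_a(x,y) : (x,y) ∈ ℓ², x·x̄ + y + ȳ = 0} (the full unipotent group) and U = {u_a(0,y) : y + ȳ = 0}. If there exists x₀ ∈ ℓ with x₀ ≠ x̄₀, then the commutator subgroup [P,P] equals U, and hence P^ab ≅ P/U. -/

import Mathlib

/-!
The commutator of `u_a(u,v)` and `u_a(x,y)` is `u_a(0, u·x̄ - ū·x)`, and its last entry is negated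
by the involution, so `[P,P] ≤ U`. Conversely, if `y + ȳ = 0` then `ū = -u` for `u = y/2`, so `y`
is the commutator entry of `u_a(y/2, ·)` with `u_a(1, ·)`. Each `x` occurs as the first coordinate
of some `u_a(x,z) ∈ P`, for instance with `z = -x·x̄/2`.
-/

/-- The upper unitriangular matrix `u_a(x,y) = [[1, -x̄, y],[0,1,x],[0,0,1]]`,
where `x̄ = σ x` for an involution `σ` of the field `ℓ`. -/
def ua {ℓ : Type*} [Field ℓ] (σ : ℓ ≃+* ℓ) (x y : ℓ) : Matrix (Fin 3) (Fin 3) ℓ :=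
  !![1, -σ x, y; 0, 1, x; 0, 0, 1]

/-- The matrix `u_a(x,y)` as an element of `GL₃(ℓ)`. -/
def uaGL {ℓ : Type*} [Field ℓ] (σ : ℓ ≃+* ℓ) (x y : ℓ) : GL (Fin 3) ℓ :=
  Matrix.GeneralLinearGroup.mkOfDetNeZero (ua σ x y) (by simp [ua, Matrix.det_fin_three])

lemma uaGL_val {ℓ : Type*} [Field ℓ] (σ : ℓ ≃+* ℓ) (x y : ℓ) : (uaGL σ x y).val = ua σ x y := rfl

lemma ua_mul {ℓ : Type*} [Field ℓ] (σ : ℓ ≃+* ℓ) (x y x' y' : ℓ) :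
    ua σ x y * ua σ x' y' = ua σ (x + x') (y + y' - σ x * x') := by
  ext i j
  fin_cases i <;> fin_cases j <;> simp [ua, Matrix.mul_apply, Fin.sum_univ_three] <;> ring

open scoped commutatorElement in
lemma commutator_val {ℓ : Type*} [Field ℓ] (σ : ℓ ≃+* ℓ) {g h : GL (Fin 3) ℓ} {u v x y : ℓ}
    (hg : g.val = ua σ u v) (hh : h.val = ua σ x y) :
    ⁅g, h⁆ = uaGL σ 0 (u * σ x - σ u * x) := by
  rw [commutatorElement_def, mul_inv_eq_iff_eq_mul, mul_inv_eq_iff_eq_mul]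
  apply Units.ext
  simp only [Units.val_mul, hg, hh, uaGL_val, ua_mul, map_zero, map_add]
  congr 1 <;> ring

/-- for a nontrivial involution `σ` of a field `ℓ` of characteristic ≠ 2,
let `P` be the full unipotent group `{u_a(x,y) : x·x̄ + y + ȳ = 0}` and
`U = {u_a(0,y) : y + ȳ = 0}`, viewed as subgroups of `GL₃(ℓ)`. Then `[P,P] = U`, and
hence `P^{ab} ≅ P/U`. -/
theorem stmt16 (ℓ : Type*) [Field ℓ] (hchar : (2 : ℓ) ≠ 0)
    (σ : ℓ ≃+* ℓ) (hσ : ∀ a, σ (σ a) = a) (hne : ∃ x₀ : ℓ, σ x₀ ≠ x₀)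
    (P U : Subgroup (GL (Fin 3) ℓ))
    (hP : ∀ g : GL (Fin 3) ℓ,
      g ∈ P ↔ ∃ x y : ℓ, x * σ x + (y + σ y) = 0 ∧ (g : GL (Fin 3) ℓ).val = ua σ x y)
    (hU : ∀ g : GL (Fin 3) ℓ,
      g ∈ U ↔ ∃ y : ℓ, y + σ y = 0 ∧ (g : GL (Fin 3) ℓ).val = ua σ 0 y) :
    ⁅P, P⁆ = U := by
  apply le_antisymm
  · rw [Subgroup.commutator_le]
    intro g hg h hh
    obtain ⟨u, v, -, hg⟩ := (hP g).1 hg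
    obtain ⟨x, y, -, hh⟩ := (hP h).1 hh
    rw [commutator_val σ hg hh]
    refine (hU _).2 ⟨_, ?_, uaGL_val σ _ _⟩
    simp only [map_sub, map_mul, hσ]
    ring
  · intro g hg
    obtain ⟨y, hy, hg⟩ := (hU g).1 hg
    have σ2 : σ 2 = 2 := map_ofNat σ 2
    have mem : ∀ x : ℓ, uaGL σ x (-(x * σ x) / 2) ∈ P := by
      intro x
      refine (hP _).2 ⟨_, _, ?_, uaGL_val σ _ _⟩
      simp only [map_div₀, map_neg, map_mul, hσ, σ2]
      field_simp
      ring
    open scoped commutatorElement in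
    have key : g = ⁅uaGL σ (y / 2) (-(y / 2 * σ (y / 2)) / 2), uaGL σ 1 (-(1 * σ 1) / 2)⁆ := by
      rw [commutator_val σ (uaGL_val σ _ _) (uaGL_val σ _ _)]
      apply Units.ext
      rw [hg, uaGL_val]
      congr 1
      have hy' : σ y = -y := eq_neg_of_add_eq_zero_right hy
      rw [map_one, map_div₀, σ2, hy']
      field_simp
      ring
    rw [key]
    exact Subgroup.commutator_mem_commutator (mem _) (mem _)
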